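/- arXiv:1407.4897 — 2 statements merged into one kernel-verified Lean document; each statement's English description precedes it below -/
import Mathlib

section
/- For any integer r ≥ 1 and any positive real numbers t_1, …, t_r, one has 1/(t_1 ⋯ t_r) = ∑_{σ ∈ S_r} ∏_{i=1}^r (∑_{j=i}^r t_{σ(j)})^{−1}, where the sum is over all permutations σ of {1,…,r}. -/
/-!
Group the permutations of `{0, …, n}` by `p = σ 0`. The factor at `i = 0` is always the inverse of
the full sum, and by induction the remaining factors add up to `∏ i ≠ p, (t i)⁻¹`. Summing over `p`,
these are the terms `t p / ∏ i, t i`, whose numerators add up to the full sum.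
-/

open Finset Equiv

theorem prod_swap_zero_succ {M : Type*} [CommMonoid M] {n : ℕ} (f : Fin (n + 1) → M)
    (p : Fin (n + 1)) : ∏ i : Fin n, f (swap 0 p i.succ) = ∏ i ∈ univ.erase p, f i := by
  have erase_eq_map : univ.erase p =
      univ.map ((Fin.succEmb n).trans (swap 0 p).toEmbedding) := by
    ext i
    obtain ⟨j, rfl⟩ := (swap 0 p).surjective i
    cases j using Fin.cases <;> simp [swap_apply_eq_iff]
  simp only [erase_eq_map, prod_map, Function.Embedding.trans_apply, Fin.coe_succEmb,
    coe_toEmbedding]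

section Semifield

variable {K : Type*} [Semifield K]

theorem inv_prod_eq_inv_sum_mul_sum_inv_prod_erase {ι : Type*} [DecidableEq ι] {s : Finset ι}
    {t : ι → K} (ht : ∀ i ∈ s, t i ≠ 0) (hsum : ∑ i ∈ s, t i ≠ 0) :
    (∏ i ∈ s, t i)⁻¹ = (∑ i ∈ s, t i)⁻¹ * ∑ p ∈ s, (∏ i ∈ s.erase p, t i)⁻¹ := by
  have inv_prod_erase : ∀ p ∈ s, (∏ i ∈ s.erase p, t i)⁻¹ = t p * (∏ i ∈ s, t i)⁻¹ :=
    fun p hp ↦ by rw [← mul_prod_erase s t hp, mul_inv, mul_inv_cancel_left₀ (ht p hp)]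
  rw [sum_congr rfl inv_prod_erase, ← sum_mul, inv_mul_cancel_left₀ hsum]

theorem sum_perm_fin_succ_prod_inv_sum_Ici {n : ℕ} (t : Fin (n + 1) → K) :
    ∑ σ : Perm (Fin (n + 1)), ∏ i, (∑ j ∈ Ici i, t (σ j))⁻¹ =
      (∑ i, t i)⁻¹ * ∑ p, ∑ e : Perm (Fin n), ∏ i, (∑ j ∈ Ici i, t (swap 0 p (e j).succ))⁻¹ := by
  have prod_decomposeFin_symm (p : Fin (n + 1)) (e : Perm (Fin n)) :
      ∏ i, (∑ j ∈ Ici i, t (Perm.decomposeFin.symm (p, e) j))⁻¹ =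
        (∑ i, t i)⁻¹ * ∏ i, (∑ j ∈ Ici i, t (swap 0 p (e j).succ))⁻¹ := by
    have Ici_zero : Ici (0 : Fin (n + 1)) = univ := Ici_bot
    rw [Fin.prod_univ_succ, Ici_zero, Equiv.sum_comp _ t]
    simp only [Fin.sum_Ici_succ, Perm.decomposeFin_symm_apply_succ]
  rw [← Equiv.sum_comp Perm.decomposeFin.symm, Fintype.sum_prod_type]
  simp only [prod_decomposeFin_symm, mul_sum]

theorem inv_prod_eq_sum_perm_general {r : ℕ} (t : Fin r → K)
    (ht : ∀ s : Finset (Fin r), s.Nonempty → ∑ i ∈ s, t i ≠ 0) :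
    (∏ i, t i)⁻¹ = ∑ σ : Perm (Fin r), ∏ i, (∑ j ∈ Ici i, t (σ j))⁻¹ := by
  induction r with
  | zero => simp
  | succ n ih =>
    have ne_zero : ∀ i ∈ univ, t i ≠ 0 := fun i _ ↦ by simpa using ht {i} (singleton_nonempty i)
    have subsum_ne_zero (p : Fin (n + 1)) (s : Finset (Fin n)) (hs : s.Nonempty) :
        ∑ i ∈ s, t (swap 0 p i.succ) ≠ 0 := by
      simpa using ht (s.map ((Fin.succEmb n).trans (swap 0 p).toEmbedding)) hs.map
    rw [sum_perm_fin_succ_prod_inv_sum_Ici,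
      inv_prod_eq_inv_sum_mul_sum_inv_prod_erase ne_zero (ht univ univ_nonempty)]
    congr! 2 with p
    rw [← prod_swap_zero_succ, ih (fun i ↦ t (swap 0 p i.succ)) (subsum_ne_zero p)]

end Semifield

/-- **Polymath8b, Lemma 4.5**: for positive reals `t₁, …, t_r`,
`1/(t₁ ⋯ t_r) = ∑_{σ ∈ S_r} ∏_{i=1}^r (∑_{j=i}^r t_{σ(j)})⁻¹`. -/
theorem inv_prod_eq_sum_perm (r : ℕ) (hr : 1 ≤ r) (t : Fin r → ℝ) (ht : ∀ i, 0 < t i) :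
    (∏ i, t i)⁻¹ = ∑ σ : Equiv.Perm (Fin r), ∏ i, (∑ j ∈ Finset.Ici i, t (σ j))⁻¹ :=
  inv_prod_eq_sum_perm_general t fun _ hs ↦ (sum_pos (fun i _ ↦ ht i) hs).ne'
end

section
/- For any smooth compactly supported function F : [0,∞) → ℝ, one has ∑_{r=1}^∞ ∫_{0 < t_1 < … < t_r, t_1+…+t_r = 1} |∂_{(t_1)} ⋯ ∂_{(t_r)} F(0)|² · (dt_1 ⋯ dt_{r−1})/(t_1 ⋯ t_r) = ∫_0^1 |F'(t)|² dt, where for h > 0 the difference operator is ∂_{(h)}F(x) := F(x+h) − F(x), and the integral over the hyperplane {t_1+…+t_r = 1} is with respect to the measure dt_1 ⋯ dt_{r−1} (i.e., substituting t_r = 1 − t_1 − … − t_{r−1}); moreover the sum on the left-hand side converges absolutely. -/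
open MeasureTheory

/-- The forward difference operator `∂_{(h)} F (x) = F(x+h) − F(x)`. -/
def fdiff (h : ℝ) (F : ℝ → ℝ) : ℝ → ℝ := fun x => F (x + h) - F x

/-- Iterated forward differences `∂_{(t₁)} ⋯ ∂_{(t_r)} F`. -/
def fdiffs : (r : ℕ) → (Fin r → ℝ) → (ℝ → ℝ) → (ℝ → ℝ)
  | 0, _, F => F
  | r + 1, t, F => fdiff (t 0) (fdiffs r (fun i => t i.succ) F)

/-- The `r = n+1` term of the series: the integral over
`{0 < t₁ < ⋯ < t_{n+1}, t₁ + ⋯ + t_{n+1} = 1}` (with `t_{n+1} = 1 − t₁ − ⋯ − t_n`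
substituted, and measure `dt₁ ⋯ dt_n`) of
`|∂_{(t₁)} ⋯ ∂_{(t_{n+1})} F(0)|² / (t₁ ⋯ t_{n+1})`. -/
noncomputable def simplexTerm (F : ℝ → ℝ) (n : ℕ) : ℝ :=
  ∫ u in {u : Fin n → ℝ |
      0 < (Fin.snoc u (1 - ∑ j, u j) : Fin (n + 1) → ℝ) 0 ∧
      StrictMono (Fin.snoc u (1 - ∑ j, u j) : Fin (n + 1) → ℝ)},
    (fdiffs (n + 1) (Fin.snoc u (1 - ∑ j, u j)) F 0) ^ 2 *
      (∏ i, (Fin.snoc u (1 - ∑ j, u j) : Fin (n + 1) → ℝ) i)⁻¹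

/-!
For `T > 0` let `E(F, T) = ∫₀ᵀ |F'|²`, and let `Qₙ(F, T)` be the term of the series with `r = n + 1`
variables, taken over `t₁ + ⋯ + t_r = T`. Writing `T = ∑ tᵢ` inside the integral and isolating the
variable `tᵢ = s` gives

* `T Q₀(F, T) = (F(T) - F(0))²`,
* `T Qₙ₊₁(F, T) = ∫₀ᵀ Qₙ(∂_{(s)} F, T - s) ds`,

and the energy obeys the summed recursion
`T E(F, T) = (F(T) - F(0))² + ∫₀ᵀ E(∂_{(s)} F, T - s) ds`. By induction the partial sums of `∑ Qₙ`
are at most `E`. Since differencing lowers the degree of a polynomial, the recursion for polynomial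
`F` stops and yields equality. Both sides are quadratic forms in `F`, so the parallelogram law and
the Weierstrass approximation of `F'` carry the equality over to every `F` of class `C¹`.
-/

open Set ENNReal

section Differences

variable {F : ℝ → ℝ}

lemma fdiffs_fdiff {n : ℕ} (y : Fin n → ℝ) (s : ℝ) (F : ℝ → ℝ) :
    fdiffs n y (fdiff s F) = fdiff s (fdiffs n y F) := by
  induction n with
  | zero => rfl
  | succ n ih =>
    funext x
    simp only [fdiffs, ih, fdiff, add_right_comm x s (y 0)]
    ring

lemma fdiffs_insertNth {n : ℕ} (i : Fin (n + 1)) (s : ℝ) (y : Fin n → ℝ) (F : ℝ → ℝ) :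
    fdiffs (n + 1) (i.insertNth s y) F = fdiffs n y (fdiff s F) := by
  induction n with
  | zero => simp [Fin.fin_one_eq_zero i, fdiffs]
  | succ n ih =>
    induction i using Fin.cases with
    | zero =>
      rw [fdiffs_fdiff]
      simp [fdiffs]
    | succ i =>
      have head : (i.succ.insertNth s y : Fin (n + 2) → ℝ) 0 = y 0 := by
        simp [Fin.insertNth_apply_below]
      have tail : (fun j : Fin (n + 1) => (i.succ.insertNth s y : Fin (n + 2) → ℝ) j.succ) =
          i.insertNth s (fun j => y j.succ) := by
        refine (Fin.insertNth_eq_iff.2 ⟨by simp, ?_⟩).symm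
        funext j
        simp [Fin.removeNth, ← Fin.succ_succAbove_succ]
      rw [fdiffs, head, tail, ih, fdiffs]

lemma fdiffs_add (n : ℕ) (t : Fin n → ℝ) (F G : ℝ → ℝ) :
    fdiffs n t (F + G) = fdiffs n t F + fdiffs n t G := by
  induction n with
  | zero => rfl
  | succ n ih =>
    funext x
    simp only [fdiffs, fdiff, ih, Pi.add_apply]
    ring

lemma fdiffs_sub (n : ℕ) (t : Fin n → ℝ) (F G : ℝ → ℝ) :
    fdiffs n t (F - G) = fdiffs n t F - fdiffs n t G := by
  induction n with
  | zero => rfl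
  | succ n ih =>
    funext x
    simp only [fdiffs, fdiff, ih, Pi.sub_apply]
    ring

lemma continuous_fdiffs {X : Type*} [TopologicalSpace X] {n : ℕ} {t : X → Fin n → ℝ} {f : X → ℝ}
    (hF : Continuous F) (ht : Continuous t) (hf : Continuous f) :
    Continuous fun a => fdiffs n (t a) F (f a) := by
  induction n generalizing f with
  | zero => exact hF.comp hf
  | succ n ih =>
    have tail : Continuous fun a => fun i : Fin n => t a i.succ := by fun_prop
    exact (ih tail (by fun_prop)).sub (ih tail hf)

lemma contDiff_fdiff {k : WithTop ℕ∞} (hF : ContDiff ℝ k F) (s : ℝ) :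
    ContDiff ℝ k (fdiff s F) := by
  unfold fdiff
  fun_prop

lemma deriv_fdiff (hF : Differentiable ℝ F) (s : ℝ) :
    deriv (fdiff s F) = fdiff s (deriv F) := by
  funext x
  unfold fdiff
  rw [deriv_fun_sub (by fun_prop) (by fun_prop), deriv_comp_add_const]

end Differences

section Chamber

/-- The tuples `0 < x₀ < ⋯ < xₙ₋₁`, the region of integration before `∑ xᵢ` is fixed. -/
def posChamber (n : ℕ) : Set (Fin n → ℝ) := {x | (∀ i, 0 < x i) ∧ StrictMono x}

lemma measurableSet_posChamber (n : ℕ) : MeasurableSet (posChamber n) := by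
  have : posChamber n = (⋂ i, {x | 0 < x i}) ∩ ⋂ i, ⋂ j, ⋂ _ : i < j, {x | x i < x j} := by
    ext x
    simp [posChamber, StrictMono]
  rw [this]
  measurability

lemma mem_posChamber_succ_iff {n : ℕ} {x : Fin (n + 1) → ℝ} :
    x ∈ posChamber (n + 1) ↔ 0 < x 0 ∧ StrictMono x :=
  and_congr_left fun hx => ⟨fun h => h 0, fun h i => h.trans_le (hx.monotone (Fin.zero_le i))⟩

/-- Both sides enumerate `insert s (range y)` increasingly, so the position of `s` in that
enumeration is the only possible one. -/
lemma existsUnique_strictMono_insertNth {α : Type*} [LinearOrder α] {n : ℕ} {y : Fin n → α}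
    (hy : StrictMono y) {s : α} (hs : s ∉ range y) :
    ∃! i : Fin (n + 1), StrictMono (i.insertNth s y : Fin (n + 1) → α) := by
  have hcard : (insert s (Finset.univ.image y)).card = n + 1 := by
    rw [Finset.card_insert_of_notMem (by simpa using hs),
      Finset.card_image_of_injective _ hy.injective, Finset.card_fin]
  set e := (insert s (Finset.univ.image y)).orderEmbOfFin hcard
  have range_e : range e = insert s (range y) := by simp [e]
  obtain ⟨i, hi⟩ : s ∈ range e := range_e ▸ mem_insert s _
  have range_insertNth (k : Fin (n + 1)) (z : Fin n → α) :
      range (k.insertNth s z) = insert s (range z) := Fin.range_insertNth k s z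
  have e_eq : i.insertNth s (i.removeNth e) = e := by
    rw [← hi]
    exact Fin.insertNth_self_removeNth i e
  have removeNth_mono : StrictMono (i.removeNth e) :=
    e.strictMono.comp (Fin.strictMono_succAbove i)
  have s_notMem : s ∉ range (i.removeNth e) := by
    rintro ⟨j, hj⟩
    exact Fin.succAbove_ne i j (e.injective (hj.trans hi.symm))
  have removeNth_eq : i.removeNth e = y := by
    refine (removeNth_mono.range_inj hy).1 ?_
    rw [← insert_sdiff_self_of_notMem s_notMem, ← range_insertNth i, e_eq, range_e,
      insert_sdiff_self_of_notMem hs]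
  refine ⟨i, ?_, fun k hk => ?_⟩
  · simpa only [← removeNth_eq, e_eq] using e.strictMono
  · have : k.insertNth s y = e :=
      (hk.range_inj e.strictMono).1 (by rw [range_insertNth, range_e])
    exact e.injective (by rw [hi, ← this, Fin.insertNth_apply_same])

lemma insertNth_mem_posChamber_iff {n : ℕ} {i : Fin (n + 1)} {s : ℝ} {y : Fin n → ℝ} :
    i.insertNth s y ∈ posChamber (n + 1) ↔
      0 < s ∧ (∀ j, 0 < y j) ∧ StrictMono (i.insertNth s y : Fin (n + 1) → ℝ) := by
  simp [posChamber, Fin.forall_iff_succAbove i, and_assoc]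

lemma mem_posChamber_of_insertNth {n : ℕ} {i : Fin (n + 1)} {s : ℝ} {y : Fin n → ℝ}
    (h : i.insertNth s y ∈ posChamber (n + 1)) : y ∈ posChamber n := by
  have := h.2.comp (Fin.strictMono_succAbove i)
  refine ⟨(insertNth_mem_posChamber_iff.1 h).2.1, fun a b hab => ?_⟩
  simpa using this hab

lemma existsUnique_insertNth_mem_posChamber {n : ℕ} {s : ℝ} {y : Fin n → ℝ} (hs : 0 < s)
    (hy : y ∈ posChamber n) (hsy : s ∉ range y) :
    ∃! i : Fin (n + 1), i.insertNth s y ∈ posChamber (n + 1) := by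
  simpa only [insertNth_mem_posChamber_iff, hs, hy.1, implies_true, true_and] using
    existsUnique_strictMono_insertNth hy.2 hsy

end Chamber

section Density

variable {n : ℕ} {F : ℝ → ℝ}

/-- The integrand `|∂_{(x₀)} ⋯ ∂_{(xₙ₋₁)} F(0)|² / (x₀ ⋯ xₙ₋₁)` of the series, cut off to the
chamber `0 < x₀ < ⋯ < xₙ₋₁`. -/
noncomputable def diffDensity (n : ℕ) (F : ℝ → ℝ) : (Fin n → ℝ) → ℝ≥0∞ :=
  (posChamber n).indicator fun x => ENNReal.ofReal ((fdiffs n x F 0) ^ 2 * (∏ i, x i)⁻¹)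

lemma measurable_diffDensity_fdiff (n : ℕ) (hF : Continuous F) :
    Measurable fun p : ℝ × (Fin n → ℝ) => diffDensity n (fdiff p.1 F) p.2 := by
  have diffs : Continuous fun p : ℝ × (Fin n → ℝ) => fdiffs n p.2 (fdiff p.1 F) 0 := by
    simp only [← fdiffs_insertNth 0]
    exact continuous_fdiffs hF (by fun_prop) continuous_const
  have density : Measurable fun p : ℝ × (Fin n → ℝ) =>
      ENNReal.ofReal ((fdiffs n p.2 (fdiff p.1 F) 0) ^ 2 * (∏ i, p.2 i)⁻¹) :=
    ((diffs.pow 2).measurable.mul (by fun_prop)).ennreal_ofReal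
  exact density.indicator (measurable_snd (measurableSet_posChamber n))

lemma measurable_diffDensity (n : ℕ) (hF : Continuous F) : Measurable (diffDensity n F) := by
  have diffs : Continuous fun x : Fin n → ℝ => fdiffs n x F 0 :=
    continuous_fdiffs hF continuous_id continuous_const
  exact Measurable.indicator (by fun_prop) (measurableSet_posChamber n)

lemma diffDensity_parallelogram (n : ℕ) (F G : ℝ → ℝ) (x : Fin n → ℝ) :
    diffDensity n (F + G) x + diffDensity n (F - G) x =
      2 * (diffDensity n F x + diffDensity n G x) := by
  by_cases hx : x ∈ posChamber n
  · have hprod : 0 ≤ (∏ i, x i)⁻¹ := inv_nonneg.2 (Finset.prod_nonneg fun i _ => (hx.1 i).le)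
    simp only [diffDensity, indicator_of_mem hx, fdiffs_add, fdiffs_sub, Pi.add_apply,
      Pi.sub_apply]
    rw [← ENNReal.ofReal_add (by positivity) (by positivity),
      ← ENNReal.ofReal_add (by positivity) (by positivity), ← ENNReal.ofReal_ofNat,
      ← ENNReal.ofReal_mul (by positivity)]
    ring_nf
  · simp [diffDensity, hx]

/-- The factor `s` cancels the new denominator, and sorting leaves one position for `s`. -/
lemma sum_ofReal_mul_diffDensity_insertNth (F : ℝ → ℝ) {s : ℝ} (hs : 0 < s) {y : Fin n → ℝ}
    (hsy : s ∉ range y) :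
    ∑ i : Fin (n + 1), ENNReal.ofReal s * diffDensity (n + 1) F (i.insertNth s y) =
      diffDensity n (fdiff s F) y := by
  by_cases hy : y ∈ posChamber n
  · obtain ⟨i, hi, hunique⟩ := existsUnique_insertNth_mem_posChamber hs hy hsy
    rw [Finset.sum_eq_single i]
    · simp only [diffDensity, indicator_of_mem hi, indicator_of_mem hy, fdiffs_insertNth,
        Fin.prod_univ_succAbove _ i, Fin.insertNth_apply_same, Fin.insertNth_apply_succAbove]
      rw [← ENNReal.ofReal_mul hs.le]
      congr 1
      field_simp
    · intro k _ hki
      rw [diffDensity, indicator_of_notMem (fun hk => hki (hunique k hk)), mul_zero]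
    · simp
  · have (i : Fin (n + 1)) : i.insertNth s y ∉ posChamber (n + 1) := fun h =>
      hy (mem_posChamber_of_insertNth h)
    simp [diffDensity, this, hy]

end Density

section Simplex

variable {n : ℕ} {T : ℝ} {F G : ℝ → ℝ}

/-- The point of the hyperplane `∑ xᵢ = T` whose first `n` coordinates are `u`. -/
def simplexPoint (T : ℝ) (u : Fin n → ℝ) : Fin (n + 1) → ℝ := Fin.snoc u (T - ∑ j, u j)

@[fun_prop]
lemma continuous_simplexPoint {X : Type*} [TopologicalSpace X] {f : X → ℝ} {u : X → Fin n → ℝ}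
    (hf : Continuous f) (hu : Continuous u) : Continuous fun x => simplexPoint (f x) (u x) := by
  unfold simplexPoint
  fun_prop

lemma sum_simplexPoint (T : ℝ) (u : Fin n → ℝ) : ∑ i, simplexPoint T u i = T := by
  simp [simplexPoint, Fin.sum_univ_castSucc]

lemma simplexPoint_insertNth_castSucc (T s : ℝ) (i : Fin (n + 1)) (v : Fin n → ℝ) :
    simplexPoint T (i.insertNth s v) = i.castSucc.insertNth s (simplexPoint (T - s) v) := by
  refine (Fin.insertNth_eq_iff.2 ⟨by simp [simplexPoint], ?_⟩).symm
  funext j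
  induction j using Fin.lastCases with
  | last => simp [simplexPoint, Fin.removeNth, Fin.sum_univ_succAbove _ i, sub_sub]
  | cast j => simp [simplexPoint, Fin.removeNth, Fin.castSucc_succAbove_castSucc]

lemma simplexPoint_snoc (T s : ℝ) (v : Fin n → ℝ) :
    simplexPoint T (Fin.snoc v (T - ∑ j, v j - s) : Fin (n + 1) → ℝ) =
      (Fin.last (n + 1)).insertNth s (simplexPoint (T - s) v) := by
  simp [simplexPoint, Fin.insertNth_last', Fin.sum_univ_castSucc, sub_right_comm]

lemma lintegral_eq_lintegral_insertNth {g : (Fin (n + 1) → ℝ) → ℝ≥0∞} (hg : Measurable g)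
    (i : Fin (n + 1)) : ∫⁻ u, g u = ∫⁻ v : Fin n → ℝ, ∫⁻ s : ℝ, g (i.insertNth s v) := by
  have e := (volume_preserving_piFinSuccAbove (fun _ : Fin (n + 1) => ℝ) i).symm
  rw [← e.lintegral_comp hg, Measure.volume_eq_prod, lintegral_prod_symm]
  · rfl
  · exact (hg.comp e.measurable).aemeasurable

/-- The last coordinate of the hyperplane is not one of the parametrization, and is reached by the
reflection `s ↦ T - ∑ vⱼ - s`. -/
lemma lintegral_simplexPoint_eq_lintegral_insertNth (T : ℝ) {g : (Fin (n + 2) → ℝ) → ℝ≥0∞}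
    (hg : Measurable g) (i : Fin (n + 2)) :
    ∫⁻ u : Fin (n + 1) → ℝ, g (simplexPoint T u) =
      ∫⁻ v : Fin n → ℝ, ∫⁻ s : ℝ, g (i.insertNth s (simplexPoint (T - s) v)) := by
  have hgT : Measurable fun u : Fin (n + 1) → ℝ => g (simplexPoint T u) :=
    hg.comp (by fun_prop : Continuous fun u => simplexPoint T u).measurable
  induction i using Fin.lastCases with
  | cast i =>
    simp only [lintegral_eq_lintegral_insertNth hgT i, simplexPoint_insertNth_castSucc]
  | last =>
    rw [lintegral_eq_lintegral_insertNth hgT (Fin.last n)]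
    refine lintegral_congr fun v => ?_
    rw [← lintegral_sub_left_eq_self _ (T - ∑ j, v j)]
    simp only [Fin.insertNth_last', simplexPoint_snoc]

lemma ae_notMem_range_simplexPoint (T : ℝ) (v : Fin n → ℝ) :
    ∀ᵐ s : ℝ, s ∉ range (simplexPoint (T - s) v) := by
  simp only [mem_range, not_exists, ae_all_iff]
  intro j
  induction j using Fin.lastCases with
  | cast j =>
    filter_upwards [Measure.ae_ne volume (v j)] with s hs
    simpa [simplexPoint] using hs.symm
  | last =>
    filter_upwards [Measure.ae_ne volume ((T - ∑ j, v j) / 2)] with s hs h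
    simp only [simplexPoint, Fin.snoc_last] at h
    exact hs (by linarith)

lemma diffDensity_simplexPoint_of_nonpos (F : ℝ → ℝ) (hT : T ≤ 0) (u : Fin n → ℝ) :
    diffDensity (n + 1) F (simplexPoint T u) = 0 := by
  refine indicator_of_notMem (fun h => hT.not_gt ?_) _
  rw [← sum_simplexPoint T u]
  exact Finset.sum_pos (fun i _ => h.1 i) Finset.univ_nonempty

lemma sum_ofReal_mul_diffDensity_simplexPoint (F : ℝ → ℝ) (T : ℝ) (u : Fin n → ℝ) :
    ∑ i, ENNReal.ofReal (simplexPoint T u i) * diffDensity (n + 1) F (simplexPoint T u) =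
      ENNReal.ofReal T * diffDensity (n + 1) F (simplexPoint T u) := by
  by_cases hu : simplexPoint T u ∈ posChamber (n + 1)
  · rw [← Finset.sum_mul, ← ENNReal.ofReal_sum_of_nonneg fun i _ => (hu.1 i).le,
      sum_simplexPoint]
  · simp [diffDensity, hu]

/-- The `r = n + 1` term of the series as a Lebesgue integral, over the simplex
`t₁ + ⋯ + t_{n+1} = T`: removing one variable `s` leaves a simplex of size `T - s`. -/
noncomputable def simplexLIntegral (n : ℕ) (F : ℝ → ℝ) (T : ℝ) : ℝ≥0∞ :=
  ∫⁻ u : Fin n → ℝ, diffDensity (n + 1) F (simplexPoint T u)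

lemma measurable_diffDensity_simplexPoint (n : ℕ) (hF : Continuous F) (T : ℝ) :
    Measurable fun u : Fin n → ℝ => diffDensity (n + 1) F (simplexPoint T u) :=
  (measurable_diffDensity (n + 1) hF).comp
    (by fun_prop : Continuous fun u => simplexPoint T u).measurable

lemma measurable_diffDensity_fdiff_simplexPoint (n : ℕ) (hF : Continuous F) (T : ℝ) :
    Measurable fun p : ℝ × (Fin n → ℝ) =>
      diffDensity (n + 1) (fdiff p.1 F) (simplexPoint (T - p.1) p.2) := by
  have point : Continuous fun p : ℝ × (Fin n → ℝ) => simplexPoint (T - p.1) p.2 := by fun_prop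
  exact (measurable_diffDensity_fdiff (n + 1) hF).comp
    (f := fun p : ℝ × (Fin n → ℝ) => (p.1, simplexPoint (T - p.1) p.2))
    (measurable_fst.prodMk point.measurable)

lemma measurable_simplexLIntegral_fdiff (n : ℕ) (hF : Continuous F) (T : ℝ) :
    Measurable fun s => simplexLIntegral n (fdiff s F) (T - s) :=
  (measurable_diffDensity_fdiff_simplexPoint n hF T).lintegral_prod_right'

lemma simplexLIntegral_parallelogram (n : ℕ) (hF : Continuous F) (hG : Continuous G) (T : ℝ) :
    simplexLIntegral n (F + G) T + simplexLIntegral n (F - G) T =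
      2 * (simplexLIntegral n F T + simplexLIntegral n G T) := by
  have meas {H : ℝ → ℝ} (hH : Continuous H) := measurable_diffDensity_simplexPoint n hH T
  simp only [simplexLIntegral]
  rw [← lintegral_add_left (meas (hF.add hG)), ← lintegral_add_left (meas hF),
    ← lintegral_const_mul]
  · simp only [diffDensity_parallelogram]
  · exact (meas hF).add (meas hG)

lemma ofReal_mul_simplexLIntegral_zero (F : ℝ → ℝ) (hT : 0 < T) :
    ENNReal.ofReal T * simplexLIntegral 0 F T = ENNReal.ofReal ((F T - F 0) ^ 2) := by
  have point (u : Fin 0 → ℝ) : simplexPoint T u = fun _ => T := by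
    funext i
    simp [simplexPoint, Fin.fin_one_eq_zero i, Fin.snoc]
  have hmem : (fun _ => T) ∈ posChamber 1 :=
    mem_posChamber_succ_iff.2 ⟨hT, fun i j h => by omega⟩
  rw [simplexLIntegral, lintegral_unique, point, diffDensity, indicator_of_mem hmem, volume_pi,
    Measure.pi_of_empty, Measure.dirac_apply_of_mem (mem_univ _), mul_one,
    ← ENNReal.ofReal_mul hT.le]
  congr 1
  simp only [fdiffs, fdiff, zero_add, Finset.prod_const, Finset.card_fin, pow_one]
  field_simp

/-- Almost every `s` differs from all coordinates of the remaining point, hence can be sorted into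
it. -/
lemma lintegral_sum_ofReal_mul_diffDensity_insertNth (F : ℝ → ℝ) (T : ℝ) (v : Fin n → ℝ) :
    ∫⁻ s : ℝ, ∑ i : Fin (n + 2),
        ENNReal.ofReal s * diffDensity (n + 2) F (i.insertNth s (simplexPoint (T - s) v)) =
      ∫⁻ s in Ioo 0 T, diffDensity (n + 1) (fdiff s F) (simplexPoint (T - s) v) := by
  rw [← lintegral_indicator measurableSet_Ioo]
  refine lintegral_congr_ae ?_
  filter_upwards [ae_notMem_range_simplexPoint T v] with s hs
  rcases le_or_gt s 0 with hs0 | hs0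
  · simp [hs0.not_gt, ENNReal.ofReal_of_nonpos hs0]
  rw [sum_ofReal_mul_diffDensity_insertNth F hs0 hs]
  rcases lt_or_ge s T with hsT | hsT
  · simp [hs0, hsT]
  · simp [hsT.not_gt, diffDensity_simplexPoint_of_nonpos _ (sub_nonpos.2 hsT)]

/-- Writing `T = ∑ xᵢ` and slicing the `i`-th summand along `xᵢ = s` removes one difference. -/
lemma ofReal_mul_simplexLIntegral_succ (n : ℕ) (hF : Continuous F) (T : ℝ) :
    ENNReal.ofReal T * simplexLIntegral (n + 1) F T =
      ∫⁻ s in Ioo 0 T, simplexLIntegral n (fdiff s F) (T - s) := by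
  have meas (i : Fin (n + 2)) : Measurable fun x : Fin (n + 2) → ℝ =>
      ENNReal.ofReal (x i) * diffDensity (n + 2) F x :=
    (measurable_pi_apply i).ennreal_ofReal.mul (measurable_diffDensity _ hF)
  have meas_insert (i : Fin (n + 2)) : Measurable fun p : (Fin n → ℝ) × ℝ =>
      ENNReal.ofReal p.2 *
        diffDensity (n + 2) F (i.insertNth p.2 (simplexPoint (T - p.2) p.1)) := by
    have : Continuous fun p : (Fin n → ℝ) × ℝ => simplexPoint (T - p.2) p.1 := by fun_prop
    exact measurable_snd.ennreal_ofReal.mul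
      ((measurable_diffDensity _ hF).comp (continuous_snd.finInsertNth i this).measurable)
  calc ENNReal.ofReal T * simplexLIntegral (n + 1) F T
      = ∑ i, ∫⁻ u : Fin (n + 1) → ℝ,
          ENNReal.ofReal (simplexPoint T u i) * diffDensity (n + 2) F (simplexPoint T u) := by
        have point : Measurable fun u : Fin (n + 1) → ℝ => simplexPoint T u := by
          exact (by fun_prop : Continuous fun u => simplexPoint T u).measurable
        rw [← lintegral_finsetSum, simplexLIntegral,
          ← lintegral_const_mul _ (measurable_diffDensity_simplexPoint _ hF T)]
        · simp only [sum_ofReal_mul_diffDensity_simplexPoint]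
        · exact fun i _ => (meas i).comp point
    _ = ∑ i : Fin (n + 2), ∫⁻ v : Fin n → ℝ, ∫⁻ s : ℝ,
          ENNReal.ofReal s * diffDensity (n + 2) F (i.insertNth s (simplexPoint (T - s) v)) := by
        refine Finset.sum_congr rfl fun i _ => ?_
        simpa only [Fin.insertNth_apply_same] using
          lintegral_simplexPoint_eq_lintegral_insertNth T (meas i) i
    _ = ∫⁻ v : Fin n → ℝ, ∫⁻ s : ℝ, ∑ i : Fin (n + 2),
          ENNReal.ofReal s * diffDensity (n + 2) F (i.insertNth s (simplexPoint (T - s) v)) := by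
        rw [← lintegral_finsetSum _ fun i _ => (meas_insert i).lintegral_prod_right']
        refine lintegral_congr fun v => (lintegral_finsetSum _ fun i _ => ?_).symm
        exact (meas_insert i).comp measurable_prodMk_left
    _ = ∫⁻ v : Fin n → ℝ, ∫⁻ s in Ioo 0 T,
          diffDensity (n + 1) (fdiff s F) (simplexPoint (T - s) v) :=
        lintegral_congr fun v => lintegral_sum_ofReal_mul_diffDensity_insertNth F T v
    _ = ∫⁻ s in Ioo 0 T, simplexLIntegral n (fdiff s F) (T - s) :=
        lintegral_lintegral_swap
          ((measurable_diffDensity_fdiff_simplexPoint n hF T).comp measurable_swap).aemeasurable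

end Simplex

section Triangle

variable {α : Type*} [LinearOrder α] [TopologicalSpace α] [OrderClosedTopology α]
  [SecondCountableTopology α] [MeasurableSpace α] [OpensMeasurableSpace α]
  {μ ν : Measure α} {g : α → α → ℝ≥0∞}

lemma measurable_uncurry_indicator_Iio (hg : Measurable (Function.uncurry g)) :
    Measurable (Function.uncurry fun x => (Iio x).indicator (g x)) :=
  hg.indicator (measurableSet_lt measurable_snd measurable_fst)

lemma measurable_lintegral_Iio [SFinite ν] (hg : Measurable (Function.uncurry g)) :
    Measurable fun x => ∫⁻ y in Iio x, g x y ∂ν := by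
  simp only [← lintegral_indicator measurableSet_Iio]
  exact (measurable_uncurry_indicator_Iio hg).lintegral_prod_right'

lemma lintegral_lintegral_Iio_swap [SFinite μ] [SFinite ν] (hg : Measurable (Function.uncurry g)) :
    ∫⁻ x, ∫⁻ y in Iio x, g x y ∂ν ∂μ = ∫⁻ y, ∫⁻ x in Ioi y, g x y ∂μ ∂ν := by
  simp only [← lintegral_indicator measurableSet_Iio, ← lintegral_indicator measurableSet_Ioi]
  exact lintegral_lintegral_swap (measurable_uncurry_indicator_Iio hg).aemeasurable

lemma lintegral_lintegral_eq_two_mul_of_symmetric [SFinite μ] [NullSingletonClass μ]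
    (hg : Measurable (Function.uncurry g)) (hsymm : ∀ x y, g x y = g y x) :
    ∫⁻ x, ∫⁻ y, g x y ∂μ ∂μ = 2 * ∫⁻ x, ∫⁻ y in Iio x, g x y ∂μ ∂μ := by
  have split (x : α) :
      ∫⁻ y, g x y ∂μ = ∫⁻ y in Iio x, g x y ∂μ + ∫⁻ y in Ioi x, g y x ∂μ := by
    rw [← lintegral_add_compl (g x) (measurableSet_Iio (a := x)), compl_Iio,
      ← restrict_Ioi_eq_restrict_Ici]
    simp only [hsymm x]
  simp only [split]
  rw [lintegral_add_left (measurable_lintegral_Iio hg), ← lintegral_lintegral_Iio_swap hg, two_mul]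

end Triangle

section Energy

variable {T : ℝ} {F : ℝ → ℝ}

lemma lintegral_Ioo_ofReal {g : ℝ → ℝ} (hg : Continuous g) (hg0 : ∀ x, 0 ≤ g x) {a b : ℝ}
    (hab : a ≤ b) :
    ∫⁻ x in Ioo a b, ENNReal.ofReal (g x) = ENNReal.ofReal (∫ x in a..b, g x) := by
  rw [intervalIntegral.integral_of_le hab, integral_Ioc_eq_integral_Ioo,
    ofReal_integral_eq_lintegral_ofReal (hg.integrableOn_Icc.mono_set Ioo_subset_Icc_self)
      (ae_of_all _ hg0)]

/-- The substitutions `y = x + s`, then `x = y - s`, on either side of an exchange of integrals. -/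
lemma lintegral_lintegral_Ioo_shear {g : ℝ → ℝ → ℝ≥0∞} (hg : Measurable (Function.uncurry g))
    (T : ℝ) :
    ∫⁻ s in Ioo 0 T, ∫⁻ x in Ioo 0 (T - s), g x (x + s) =
      ∫⁻ y in Ioo 0 T, ∫⁻ x in Ioo 0 y, g x y := by
  have translate : ∀ s ∈ Ioo 0 T, ∫⁻ x in Ioo 0 (T - s), g x (x + s) =
      ∫⁻ y in Ioi s, g (y - s) y ∂volume.restrict (Ioo 0 T) := fun s hs => by
    rw [Measure.restrict_restrict measurableSet_Ioi, Ioi_inter_Ioo, max_eq_left hs.1.le]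
    simpa using (measurePreserving_add_right volume s).setLIntegral_comp_preimage_emb
      (measurableEmbedding_addRight s) (fun y => g (y - s) y) (Ioo s T)
  have reflect : ∀ y ∈ Ioo 0 T, ∫⁻ s in Iio y, g (y - s) y ∂volume.restrict (Ioo 0 T) =
      ∫⁻ x in Ioo 0 y, g x y := fun y hy => by
    rw [Measure.restrict_restrict measurableSet_Iio, Iio_inter_Ioo, min_eq_left hy.2.le]
    simpa using (Measure.measurePreserving_sub_left volume y).setLIntegral_comp_preimage_emb
      (Homeomorph.subLeft y).measurableEmbedding (fun x => g x y) (Ioo 0 y)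
  rw [setLIntegral_congr_fun measurableSet_Ioo translate,
    ← setLIntegral_congr_fun measurableSet_Ioo reflect]
  exact (lintegral_lintegral_Iio_swap (g := fun y s => g (y - s) y)
    (hg.comp (by fun_prop : Measurable fun p : ℝ × ℝ => (p.1 - p.2, p.1)))).symm

lemma two_mul_lintegral_shear_eq_of_symmetric {g : ℝ → ℝ → ℝ≥0∞}
    (hg : Measurable (Function.uncurry g)) (hsymm : ∀ x y, g x y = g y x) (T : ℝ) :
    2 * ∫⁻ s in Ioo 0 T, ∫⁻ x in Ioo 0 (T - s), g x (x + s) =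
      ∫⁻ x in Ioo 0 T, ∫⁻ y in Ioo 0 T, g x y := by
  rw [lintegral_lintegral_Ioo_shear hg, lintegral_lintegral_eq_two_mul_of_symmetric hg hsymm]
  congr 1
  refine setLIntegral_congr_fun measurableSet_Ioo fun x hx => ?_
  simp only [Measure.restrict_restrict measurableSet_Iio, Iio_inter_Ioo, min_eq_left hx.2.le,
    hsymm x]

lemma integral_integral_sub_sq {f : ℝ → ℝ} (hf : Continuous f) (a b : ℝ) :
    ∫ x in a..b, ∫ y in a..b, (f y - f x) ^ 2 =
      2 * ((b - a) * (∫ x in a..b, f x ^ 2) - (∫ x in a..b, f x) ^ 2) := by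
  have integrable {g : ℝ → ℝ} (hg : Continuous g) : IntervalIntegrable g volume a b :=
    hg.intervalIntegrable a b
  have expand (c : ℝ) : ∫ y in a..b, (f y - c) ^ 2 =
      (∫ y in a..b, f y ^ 2) - 2 * c * (∫ y in a..b, f y) + (b - a) * c ^ 2 := by
    simp only [sub_sq, mul_right_comm _ (f _) c]
    rw [intervalIntegral.integral_add, intervalIntegral.integral_sub,
      intervalIntegral.integral_const_mul, intervalIntegral.integral_const, smul_eq_mul]
    all_goals exact integrable (by fun_prop)
  simp only [expand]
  rw [intervalIntegral.integral_add, intervalIntegral.integral_sub,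
    intervalIntegral.integral_mul_const, intervalIntegral.integral_const_mul,
    intervalIntegral.integral_const_mul, intervalIntegral.integral_const, smul_eq_mul]
  · ring
  all_goals exact integrable (by fun_prop)

/-- The Dirichlet energy `∫₀ᵀ |F'|²`, the right-hand side of the identity for `T = 1`. -/
noncomputable def energy (F : ℝ → ℝ) (T : ℝ) : ℝ≥0∞ :=
  ∫⁻ x in Ioo 0 T, ENNReal.ofReal (deriv F x ^ 2)

lemma energy_eq_ofReal (hF : ContDiff ℝ 1 F) (hT : 0 ≤ T) :
    energy F T = ENNReal.ofReal (∫ x in 0..T, deriv F x ^ 2) :=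
  lintegral_Ioo_ofReal (hF.continuous_deriv_one.pow 2) (fun _ => sq_nonneg _) hT

lemma two_mul_lintegral_energy_fdiff (hF : ContDiff ℝ 1 F) (hT : 0 ≤ T) :
    2 * ∫⁻ s in Ioo 0 T, energy (fdiff s F) (T - s) =
      ENNReal.ofReal (∫ x in 0..T, ∫ y in 0..T, (deriv F y - deriv F x) ^ 2) := by
  have : Continuous (deriv F) := hF.continuous_deriv_one
  have inner (x : ℝ) : ∫⁻ y in Ioo 0 T, ENNReal.ofReal ((deriv F y - deriv F x) ^ 2) =
      ENNReal.ofReal (∫ y in 0..T, (deriv F y - deriv F x) ^ 2) :=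
    lintegral_Ioo_ofReal (by fun_prop) (fun _ => sq_nonneg _) hT
  simp only [energy, deriv_fdiff (hF.differentiable one_ne_zero), fdiff]
  rw [two_mul_lintegral_shear_eq_of_symmetric
      (g := fun x y => ENNReal.ofReal ((deriv F y - deriv F x) ^ 2)) (by fun_prop)
      (fun x y => by rw [sub_sq_comm]),
    ← lintegral_Ioo_ofReal (intervalIntegral.continuous_parametric_intervalIntegral_of_continuous'
      (by fun_prop) 0 T) (fun x => intervalIntegral.integral_nonneg hT fun y _ => sq_nonneg _) hT]
  simp only [inner]

/-- The identity `∬ (f(y) - f(x))² = 2(T∫f² - (∫f)²)` for `f = F'`. -/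
lemma ofReal_mul_energy (hF : ContDiff ℝ 1 F) (hT : 0 < T) :
    ENNReal.ofReal T * energy F T =
      ENNReal.ofReal ((F T - F 0) ^ 2) + ∫⁻ s in Ioo 0 T, energy (fdiff s F) (T - s) := by
  have hf : Continuous (deriv F) := hF.continuous_deriv_one
  have ftc : ∫ x in 0..T, deriv F x = F T - F 0 :=
    intervalIntegral.integral_deriv_eq_sub (fun x _ => hF.differentiable one_ne_zero x)
      (hf.intervalIntegrable _ _)
  have double := integral_integral_sub_sq hf 0 T
  have double_nonneg : 0 ≤ ∫ x in 0..T, ∫ y in 0..T, (deriv F y - deriv F x) ^ 2 :=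
    intervalIntegral.integral_nonneg hT.le fun x _ =>
      intervalIntegral.integral_nonneg hT.le fun y _ => sq_nonneg _
  rw [← ENNReal.mul_right_inj two_ne_zero ofNat_ne_top, mul_add,
    two_mul_lintegral_energy_fdiff hF hT.le, energy_eq_ofReal hF hT.le, ← ENNReal.ofReal_ofNat,
    ← ENNReal.ofReal_mul hT.le, ← ENNReal.ofReal_mul zero_le_two, ← ENNReal.ofReal_mul zero_le_two,
    ← ENNReal.ofReal_add (by positivity) double_nonneg, double, ftc]
  ring_nf

end Energy

section Identity

variable {T : ℝ} {F G : ℝ → ℝ}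

lemma energy_ne_top (hF : ContDiff ℝ 1 F) (hT : 0 ≤ T) : energy F T ≠ ∞ := by
  rw [energy_eq_ofReal hF hT]
  exact ofReal_ne_top

lemma energy_parallelogram (hF : ContDiff ℝ 1 F) (hG : ContDiff ℝ 1 G) (T : ℝ) :
    energy (F + G) T + energy (F - G) T = 2 * (energy F T + energy G T) := by
  have meas {H : ℝ → ℝ} (hH : ContDiff ℝ 1 H) :
      Measurable fun x => ENNReal.ofReal (deriv H x ^ 2) :=
    (hH.continuous_deriv_one.pow 2).measurable.ennreal_ofReal
  simp only [energy]
  rw [← lintegral_add_left (meas (H := F + G) (hF.add hG)), ← lintegral_add_left (meas hF),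
    ← lintegral_const_mul]
  · refine lintegral_congr fun x => ?_
    have hFx : DifferentiableAt ℝ F x := hF.differentiable one_ne_zero x
    have hGx : DifferentiableAt ℝ G x := hG.differentiable one_ne_zero x
    rw [deriv_add hFx hGx, deriv_sub hFx hGx, ← ENNReal.ofReal_add (by positivity) (by positivity),
      ← ENNReal.ofReal_add (by positivity) (by positivity), ← ENNReal.ofReal_ofNat,
      ← ENNReal.ofReal_mul (by positivity)]
    ring_nf
  · exact (meas hF).add (meas hG)

lemma ofReal_mul_sum_range_succ (n : ℕ) (hF : Continuous F) (hT : 0 < T) :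
    ENNReal.ofReal T * ∑ k ∈ Finset.range (n + 1), simplexLIntegral k F T =
      ENNReal.ofReal ((F T - F 0) ^ 2) +
        ∫⁻ s in Ioo 0 T, ∑ k ∈ Finset.range n, simplexLIntegral k (fdiff s F) (T - s) := by
  rw [Finset.sum_range_succ', mul_add, ofReal_mul_simplexLIntegral_zero F hT, Finset.mul_sum,
    lintegral_finsetSum _ fun k _ => measurable_simplexLIntegral_fdiff k hF T, add_comm]
  simp only [ofReal_mul_simplexLIntegral_succ _ hF]

lemma sum_range_simplexLIntegral_le_energy (n : ℕ) (hF : ContDiff ℝ 1 F) (hT : 0 < T) :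
    ∑ k ∈ Finset.range n, simplexLIntegral k F T ≤ energy F T := by
  induction n generalizing F T with
  | zero => simp
  | succ n ih =>
    rw [← ENNReal.mul_le_mul_iff_right (ofReal_pos.2 hT).ne' ofReal_ne_top,
      ofReal_mul_sum_range_succ n hF.continuous hT, ofReal_mul_energy hF hT]
    refine add_le_add le_rfl ?_
    exact setLIntegral_mono' measurableSet_Ioo fun s hs =>
      ih (contDiff_fdiff hF s) (sub_pos.2 hs.2)

lemma contDiff_one_of_hasDerivAt_eval {p : Polynomial ℝ} (hF : ∀ x, HasDerivAt F (p.eval x) x) :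
    ContDiff ℝ 1 F := by
  refine contDiff_one_iff_deriv.2 ⟨fun x => (hF x).differentiableAt, ?_⟩
  rw [funext fun x => (hF x).deriv]
  exact p.continuous

lemma hasDerivAt_fdiff_of_eval {p : Polynomial ℝ} (hF : ∀ x, HasDerivAt F (p.eval x) x) (s x : ℝ) :
    HasDerivAt (fdiff s F) ((p.taylor s - p).eval x) x := by
  rw [Polynomial.eval_sub, Polynomial.taylor_eval]
  exact ((hF (x + s)).comp_add_const x s).sub (hF x)

lemma degree_taylor_sub_self_lt {R : Type*} [CommRing R] {p : Polynomial R} {d : ℕ}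
    (hp : p.degree < (d + 1 : ℕ)) (r : R) : (p.taylor r - p).degree < d := by
  rcases eq_or_ne p 0 with rfl | hp0
  · simp
  · exact (Polynomial.degree_sub_lt_right (p.degree_taylor r) hp0 (by simp)).trans_le
      (Order.le_of_lt_succ hp)

/-- Differencing lowers the degree of `F'`, so the recursion terminates after `d` steps. -/
lemma energy_le_sum_range_of_degree_lt {d : ℕ} {p : Polynomial ℝ}
    (hF : ∀ x, HasDerivAt F (p.eval x) x) (hp : p.degree < d) (hT : 0 < T) :
    energy F T ≤ ∑ k ∈ Finset.range d, simplexLIntegral k F T := by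
  induction d generalizing F T p with
  | zero =>
    obtain rfl : p = 0 := by simpa using hp
    simp [energy, (hF _).deriv]
  | succ d ih =>
    have hF1 : ContDiff ℝ 1 F := contDiff_one_of_hasDerivAt_eval hF
    rw [← ENNReal.mul_le_mul_iff_right (ofReal_pos.2 hT).ne' ofReal_ne_top,
      ofReal_mul_sum_range_succ d hF1.continuous hT, ofReal_mul_energy hF1 hT]
    refine add_le_add le_rfl ?_
    exact setLIntegral_mono' measurableSet_Ioo fun s hs =>
      ih (hasDerivAt_fdiff_of_eval hF s) (degree_taylor_sub_self_lt hp s) (sub_pos.2 hs.2)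

lemma exists_polynomial_energy_sub_le (hF : ContDiff ℝ 1 F) (hT : 0 < T) {ε : ℝ} (hε : 0 < ε) :
    ∃ (p : Polynomial ℝ) (P : ℝ → ℝ), (∀ x, HasDerivAt P (p.eval x) x) ∧
      energy (F - P) T ≤ ENNReal.ofReal ε := by
  obtain ⟨p, hp⟩ := exists_polynomial_near_of_continuousOn 0 T (deriv F)
    hF.continuous_deriv_one.continuousOn √(ε / T) (by positivity)
  have hP (x : ℝ) : HasDerivAt (fun x => ∫ t in 0..x, p.eval t) (p.eval x) x :=
    (p.continuous.integral_hasStrictDerivAt 0 x).hasDerivAt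
  refine ⟨p, _, hP, ?_⟩
  have bound : ∀ x ∈ Ioo 0 T,
      ENNReal.ofReal (deriv (F - fun x => ∫ t in 0..x, p.eval t) x ^ 2) ≤
        ENNReal.ofReal (ε / T) := fun x hx => by
    rw [deriv_sub (hF.differentiable one_ne_zero x) (hP x).differentiableAt, (hP x).deriv]
    refine ENNReal.ofReal_le_ofReal ?_
    rw [← sq_abs, abs_sub_comm, ← Real.le_sqrt (abs_nonneg _) (by positivity)]
    exact (hp x (Ioo_subset_Icc_self hx)).le
  calc energy (F - fun x => ∫ t in 0..x, p.eval t) T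
      ≤ ∫⁻ _ in Ioo 0 T, ENNReal.ofReal (ε / T) := setLIntegral_mono' measurableSet_Ioo bound
    _ = ENNReal.ofReal ε := by
      rw [setLIntegral_const, Real.volume_Ioo, ← ENNReal.ofReal_mul (by positivity), sub_zero,
        div_mul_cancel₀ _ hT.ne']

lemma tsum_simplexLIntegral_le_energy (hF : ContDiff ℝ 1 F) (hT : 0 < T) :
    ∑' n, simplexLIntegral n F T ≤ energy F T :=
  ENNReal.tsum_le_of_sum_range_le fun n => sum_range_simplexLIntegral_le_energy n hF hT

lemma tsum_simplexLIntegral_parallelogram (hF : Continuous F) (hG : Continuous G) (T : ℝ) :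
    ∑' n, simplexLIntegral n (F + G) T + ∑' n, simplexLIntegral n (F - G) T =
      2 * (∑' n, simplexLIntegral n F T + ∑' n, simplexLIntegral n G T) := by
  simp only [← ENNReal.tsum_add, ← ENNReal.tsum_mul_left, simplexLIntegral_parallelogram _ hF hG]

/-- The defect `D = energy - ∑'` is nonnegative and obeys the parallelogram law, whence
`D (F + G) ≤ 2 D F + 2 D G`. -/
lemma energy_add_le (hF : ContDiff ℝ 1 F) (hG : ContDiff ℝ 1 G) (hT : 0 < T)
    (hexact : energy F T ≤ ∑' n, simplexLIntegral n F T) :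
    energy (F + G) T ≤ ∑' n, simplexLIntegral n (F + G) T + 2 * energy G T := by
  have hFG : ContDiff ℝ 1 (F - G) := hF.sub hG
  rw [← ENNReal.add_le_add_iff_right (energy_ne_top hFG hT.le)]
  calc energy (F + G) T + energy (F - G) T
      = 2 * energy F T + 2 * energy G T := by rw [energy_parallelogram hF hG, mul_add]
    _ ≤ 2 * (∑' n, simplexLIntegral n F T + ∑' n, simplexLIntegral n G T) + 2 * energy G T := by
      gcongr
      exact hexact.trans le_self_add
    _ = ∑' n, simplexLIntegral n (F + G) T + ∑' n, simplexLIntegral n (F - G) T +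
        2 * energy G T := by
      rw [tsum_simplexLIntegral_parallelogram hF.continuous hG.continuous]
    _ ≤ ∑' n, simplexLIntegral n (F + G) T + energy (F - G) T + 2 * energy G T := by
      gcongr
      exact tsum_simplexLIntegral_le_energy hFG hT
    _ = ∑' n, simplexLIntegral n (F + G) T + 2 * energy G T + energy (F - G) T :=
      add_right_comm _ _ _

lemma tsum_simplexLIntegral_eq_energy (hF : ContDiff ℝ 1 F) (hT : 0 < T) :
    ∑' n, simplexLIntegral n F T = energy F T := by
  refine (tsum_simplexLIntegral_le_energy hF hT).antisymm ?_
  refine ENNReal.le_of_forall_pos_le_add fun ε hε _ => ?_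
  obtain ⟨p, P, hP, happrox⟩ :=
    exists_polynomial_energy_sub_le hF hT (half_pos (NNReal.coe_pos.2 hε))
  have hP1 : ContDiff ℝ 1 P := contDiff_one_of_hasDerivAt_eval hP
  have hdegree : p.degree < (p.natDegree + 1 : ℕ) :=
    Polynomial.degree_le_natDegree.trans_lt (by exact_mod_cast p.natDegree.lt_succ_self)
  have hexact : energy P T ≤ ∑' n, simplexLIntegral n P T :=
    (energy_le_sum_range_of_degree_lt hP hdegree hT).trans (ENNReal.sum_le_tsum _)
  have hle := energy_add_le (G := F - P) hP1 (hF.sub hP1) hT hexact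
  calc energy F T
      ≤ ∑' n, simplexLIntegral n F T + 2 * energy (F - P) T := by
        simpa only [add_sub_cancel] using hle
    _ ≤ ∑' n, simplexLIntegral n F T + ε := by
        gcongr
        calc 2 * energy (F - P) T ≤ 2 * ENNReal.ofReal (ε / 2) := by gcongr
          _ = ε := by
            rw [← ENNReal.ofReal_ofNat, ← ENNReal.ofReal_mul zero_le_two,
              mul_div_cancel₀ _ two_ne_zero, ENNReal.ofReal_coe_nnreal]

lemma simplexTerm_eq_toReal (hF : Continuous F) (n : ℕ) :
    simplexTerm F n = (simplexLIntegral n F 1).toReal := by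
  have point : Continuous fun u : Fin n → ℝ => simplexPoint 1 u := by fun_prop
  have chamber : MeasurableSet (simplexPoint 1 ⁻¹' posChamber (n + 1)) :=
    point.measurable (measurableSet_posChamber (n + 1))
  have integrand : Measurable fun u : Fin n → ℝ =>
      fdiffs (n + 1) (simplexPoint 1 u) F 0 ^ 2 * (∏ i, simplexPoint 1 u i)⁻¹ :=
    ((continuous_fdiffs hF point continuous_const).pow 2).measurable.mul
      (by fun_prop : Continuous fun u : Fin n → ℝ => ∏ i, simplexPoint 1 u i).measurable.inv
  calc simplexTerm F n
      = ∫ u in simplexPoint 1 ⁻¹' posChamber (n + 1),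
          fdiffs (n + 1) (simplexPoint 1 u) F 0 ^ 2 * (∏ i, simplexPoint 1 u i)⁻¹ := by
        have : simplexPoint 1 ⁻¹' posChamber (n + 1) =
            {u : Fin n → ℝ | 0 < simplexPoint 1 u 0 ∧ StrictMono (simplexPoint 1 u)} :=
          Set.ext fun _ => mem_posChamber_succ_iff
        rw [this]
        rfl
    _ = (simplexLIntegral n F 1).toReal := by
        rw [integral_eq_lintegral_of_nonneg_ae _ integrand.aestronglyMeasurable,
          ← lintegral_indicator chamber]
        · rfl
        · filter_upwards [ae_restrict_mem chamber] with u hu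
          exact mul_nonneg (sq_nonneg _) (inv_nonneg.2 (Finset.prod_nonneg fun i _ => (hu.1 i).le))

end Identity

theorem sum_simplexTerm_eq_integral_deriv_sq_general (F : ℝ → ℝ) (hF : ContDiff ℝ 1 F) :
    HasSum (fun n : ℕ => simplexTerm F n) (∫ t in Icc (0 : ℝ) 1, deriv F t ^ 2) := by
  have tsum_eq : ∑' n, simplexLIntegral n F 1 = energy F 1 :=
    tsum_simplexLIntegral_eq_energy hF one_pos
  have hfin : ∑' n, simplexLIntegral n F 1 ≠ ∞ := tsum_eq ▸ energy_ne_top hF zero_le_one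
  have energy_toReal : (energy F 1).toReal = ∫ t in Icc (0 : ℝ) 1, deriv F t ^ 2 := by
    rw [energy_eq_ofReal hF zero_le_one, intervalIntegral.integral_of_le zero_le_one,
      ← integral_Icc_eq_integral_Ioc, ENNReal.toReal_ofReal (integral_nonneg fun _ => sq_nonneg _)]
  simp only [simplexTerm_eq_toReal hF.continuous, ← energy_toReal, ← tsum_eq]
  rw [ENNReal.tsum_toReal_eq fun n => ENNReal.ne_top_of_tsum_ne_top hfin n]
  exact ENNReal.hasSum_toReal hfin

/-- **Polymath8b, identity (4.36)**: for smooth compactly supported `F : [0,∞) → ℝ`,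
`∑_{r ≥ 1} ∫_{0 < t₁ < ⋯ < t_r, ∑ tᵢ = 1} |∂_{(t₁)} ⋯ ∂_{(t_r)} F(0)|²
  (dt₁ ⋯ dt_{r-1})/(t₁ ⋯ t_r) = ∫_0^1 |F'(t)|² dt`,
the series converging (absolutely, as it is a sum of nonnegative terms). -/
theorem sum_simplexTerm_eq_integral_deriv_sq (F : ℝ → ℝ)
    (hF : ContDiff ℝ (⊤ : ℕ∞) F) (hsupp : HasCompactSupport F) :
    HasSum (fun n : ℕ => simplexTerm F n)
      (∫ t in Set.Icc (0 : ℝ) 1, (deriv F t) ^ 2) :=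
  sum_simplexTerm_eq_integral_deriv_sq_general F (hF.of_le (by simp))
end
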